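/- Let M ≥ 3 be an integer and let a ∈ (0,1], b ∈ [0,1) satisfy a² + b² = 1. For each integer k define T_k = (a·cos(2πk/M), a·sin(2πk/M), b) ∈ ℝ³. Then for every integer k, the vectors T_{k−1} × T_k and T_k × T_{k+1} are nonzero, have equal norms, and ⟨T_{k−1} × T_k, T_k × T_{k+1}⟩ / ‖T_{k−1} × T_k‖² = cos(2·arctan(b·tan(π/M))); that is, the angle between consecutive binormal directions of the regular helical M-polygon equals θ₀ = 2·arctan(b·tan(π/M)). -/

import Mathlib

/-!
Tangent vectors of a helix have inner products `a ^ 2 * cos (θ - φ) + b ^ 2` depending only on the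
difference of their angles, so by the Binet–Cauchy identity the inner products of the binormals of
a helical polygon are explicit. For tangents spaced by `2 * p`, the squared norm of a binormal and
the inner product of two consecutive ones are both multiples of `(2 * a * sin p) ^ 2`, and their
quotient is `(1 - t ^ 2) / (1 + t ^ 2) = cos (2 * arctan t)` with
`t = b / √(a ^ 2 + b ^ 2) * tan p`.
-/

open RealInnerProductSpace Matrix

/-- The cross product on `EuclideanSpace ℝ (Fin 3)`. -/
noncomputable def cross3 (u v : EuclideanSpace ℝ (Fin 3)) : EuclideanSpace ℝ (Fin 3) :=
  (WithLp.equiv 2 (Fin 3 → ℝ)).symm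
    (crossProduct ((WithLp.equiv 2 (Fin 3 → ℝ)) u) ((WithLp.equiv 2 (Fin 3 → ℝ)) v))

theorem inner_cross3_cross3 (u v w x : EuclideanSpace ℝ (Fin 3)) :
    ⟪cross3 u v, cross3 w x⟫ = ⟪u, w⟫ * ⟪v, x⟫ - ⟪u, x⟫ * ⟪v, w⟫ := by
  simp only [EuclideanSpace.inner_eq_star_dotProduct, star_trivial]
  change w.ofLp ⨯₃ x.ofLp ⬝ᵥ u.ofLp ⨯₃ v.ofLp = _
  rw [cross_dot_cross, dotProduct_comm w.ofLp v.ofLp]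
  ring

theorem norm_cross3_sq (u v : EuclideanSpace ℝ (Fin 3)) :
    ‖cross3 u v‖ ^ 2 = ‖u‖ ^ 2 * ‖v‖ ^ 2 - ⟪u, v⟫ ^ 2 := by
  rw [← real_inner_self_eq_norm_sq, inner_cross3_cross3, real_inner_self_eq_norm_sq,
    real_inner_self_eq_norm_sq, real_inner_comm, ← sq]

theorem cos_two_mul_arctan (x : ℝ) :
    Real.cos (2 * Real.arctan x) = (1 - x ^ 2) / (1 + x ^ 2) := by
  rw [Real.cos_two_mul, Real.cos_sq_arctan]
  field_simp
  ring

theorem cos_two_mul_arctan_div_sqrt_mul_tan {a p : ℝ} (b : ℝ) (ha : a ≠ 0)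
    (hp : Real.cos p ≠ 0) :
    Real.cos (2 * Real.arctan (b / √(a ^ 2 + b ^ 2) * Real.tan p)) =
      ((a * Real.cos p) ^ 2 + b ^ 2 * Real.cos (2 * p)) / ((a * Real.cos p) ^ 2 + b ^ 2) := by
  have ht : (b / √(a ^ 2 + b ^ 2) * Real.tan p) ^ 2 =
      b ^ 2 * Real.sin p ^ 2 / ((a ^ 2 + b ^ 2) * Real.cos p ^ 2) := by
    rw [mul_pow, div_pow, Real.sq_sqrt (by positivity), Real.tan_eq_sin_div_cos, div_pow,
      div_mul_div_comm]
  have hden : (a ^ 2 + b ^ 2) * Real.cos p ^ 2 + b ^ 2 * Real.sin p ^ 2 =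
      (a * Real.cos p) ^ 2 + b ^ 2 := by
    rw [Real.sin_sq]; ring
  have hnum : (a ^ 2 + b ^ 2) * Real.cos p ^ 2 - b ^ 2 * Real.sin p ^ 2 =
      (a * Real.cos p) ^ 2 + b ^ 2 * Real.cos (2 * p) := by
    rw [Real.cos_two_mul']; ring
  rw [cos_two_mul_arctan, ht, one_sub_div (by positivity), one_add_div (by positivity), hnum,
    hden, div_div_div_cancel_right₀ (by positivity)]

/-- The tangent vector at angle `θ` of a helix around the third coordinate axis, with horizontal
component of length `|a|` and vertical component `b`. It is not normalized: its norm is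
`√(a ^ 2 + b ^ 2)`. -/
noncomputable def helixTangent (a b θ : ℝ) : EuclideanSpace ℝ (Fin 3) :=
  !₂[a * Real.cos θ, a * Real.sin θ, b]

section helixTangent

variable (a b θ φ p : ℝ)

theorem inner_helixTangent :
    ⟪helixTangent a b θ, helixTangent a b φ⟫ = a ^ 2 * Real.cos (θ - φ) + b ^ 2 := by
  simp only [helixTangent, EuclideanSpace.inner_toLp_toLp, star_trivial, vec3_dotProduct,
    cons_val, Real.cos_sub]
  ring

theorem norm_helixTangent_sq : ‖helixTangent a b θ‖ ^ 2 = a ^ 2 + b ^ 2 := by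
  rw [← real_inner_self_eq_norm_sq, inner_helixTangent, sub_self, Real.cos_zero, mul_one]

theorem norm_cross3_helixTangent_sq :
    ‖cross3 (helixTangent a b θ) (helixTangent a b (θ + 2 * p))‖ ^ 2 =
      (2 * a * Real.sin p) ^ 2 * ((a * Real.cos p) ^ 2 + b ^ 2) := by
  rw [norm_cross3_sq, norm_helixTangent_sq, norm_helixTangent_sq, inner_helixTangent,
    sub_add_cancel_left, Real.cos_neg, Real.cos_two_mul, mul_pow _ (Real.sin p), Real.sin_sq]
  ring

theorem inner_cross3_helixTangent :
    ⟪cross3 (helixTangent a b (θ - 2 * p)) (helixTangent a b θ),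
      cross3 (helixTangent a b θ) (helixTangent a b (θ + 2 * p))⟫ =
      (2 * a * Real.sin p) ^ 2 * ((a * Real.cos p) ^ 2 + b ^ 2 * Real.cos (2 * p)) := by
  have hsub : θ - 2 * p - (θ + 2 * p) = -(2 * (2 * p)) := by ring
  rw [inner_cross3_cross3, real_inner_self_eq_norm_sq, norm_helixTangent_sq]
  simp only [inner_helixTangent, sub_sub_cancel_left, sub_add_cancel_left, hsub, Real.cos_neg,
    Real.cos_two_mul, mul_pow _ (Real.sin p), Real.sin_sq]
  ring

variable {a p}

theorem cross3_helixTangent_ne_zero (ha : a ≠ 0) (hp : Real.sin (2 * p) ≠ 0) :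
    cross3 (helixTangent a b θ) (helixTangent a b (θ + 2 * p)) ≠ 0 := by
  rw [Real.sin_two_mul] at hp
  have hsin : Real.sin p ≠ 0 := right_ne_zero_of_mul (left_ne_zero_of_mul hp)
  have hcos : Real.cos p ≠ 0 := right_ne_zero_of_mul hp
  rw [← norm_ne_zero_iff, ← pow_ne_zero_iff two_ne_zero, norm_cross3_helixTangent_sq]
  positivity

end helixTangent

theorem sin_two_mul_pi_div_pos {r : ℝ} (hr : 2 < r) : 0 < Real.sin (2 * (Real.pi / r)) := by
  have hlt : 2 * (Real.pi / r) < Real.pi := by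
    rw [← mul_div_assoc, div_lt_iff₀ (by positivity), mul_comm]
    exact mul_lt_mul_of_pos_left hr Real.pi_pos
  exact Real.sin_pos_of_pos_of_lt_pi (by positivity) hlt

theorem helical_polygon_torsion_angle_general {a b p : ℝ} (ha : a ≠ 0)
    (hp : Real.sin (2 * p) ≠ 0) (T : ℤ → EuclideanSpace ℝ (Fin 3))
    (hT : ∀ k : ℤ, T k = helixTangent a b (2 * p * k)) (k : ℤ) :
    cross3 (T (k - 1)) (T k) ≠ 0 ∧
      cross3 (T k) (T (k + 1)) ≠ 0 ∧
      ‖cross3 (T (k - 1)) (T k)‖ = ‖cross3 (T k) (T (k + 1))‖ ∧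
      ⟪cross3 (T (k - 1)) (T k), cross3 (T k) (T (k + 1))⟫ / ‖cross3 (T (k - 1)) (T k)‖ ^ 2 =
        Real.cos (2 * Real.arctan (b / √(a ^ 2 + b ^ 2) * Real.tan p)) := by
  have hcos : Real.cos p ≠ 0 := right_ne_zero_of_mul (Real.sin_two_mul p ▸ hp)
  have hsucc (j : ℤ) : T (j + 1) = helixTangent a b (2 * p * j + 2 * p) := by
    rw [hT, Int.cast_add, Int.cast_one, mul_add_one]
  have hpred : T (k - 1) = helixTangent a b (2 * p * k - 2 * p) := by
    rw [hT, Int.cast_sub, Int.cast_one, mul_sub_one]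
  have hnorm (j : ℤ) : ‖cross3 (T j) (T (j + 1))‖ ^ 2 =
      (2 * a * Real.sin p) ^ 2 * ((a * Real.cos p) ^ 2 + b ^ 2) := by
    rw [hT, hsucc, norm_cross3_helixTangent_sq]
  have hne (j : ℤ) : cross3 (T j) (T (j + 1)) ≠ 0 := by
    rw [hT, hsucc]
    exact cross3_helixTangent_ne_zero b _ ha hp
  have hnorm_pred := hnorm (k - 1)
  have hne_pred := hne (k - 1)
  rw [sub_add_cancel] at hnorm_pred hne_pred
  refine ⟨hne_pred, hne k, ?_, ?_⟩
  · rw [← sq_eq_sq₀ (norm_nonneg _) (norm_nonneg _), hnorm_pred, hnorm]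
  · have hsin : (2 * a * Real.sin p) ^ 2 ≠ 0 :=
      left_ne_zero_of_mul (hnorm k ▸ pow_ne_zero 2 (norm_ne_zero_iff.mpr (hne k)))
    rw [hnorm_pred, hpred, hT k, hsucc, inner_cross3_helixTangent, mul_div_mul_left _ _ hsin,
      cos_two_mul_arctan_div_sqrt_mul_tan b ha hcos]

/-- The angle between the consecutive binormal directions `T_{k−1} × T_k` and
`T_k × T_{k+1}` of the regular helical M-polygon equals the torsion angle
`θ₀ = 2·arctan(b·tan(π/M))`: these cross products are nonzero, have equal norms, and
`⟨T_{k−1} × T_k, T_k × T_{k+1}⟩ / ‖T_{k−1} × T_k‖² = cos θ₀`. -/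
theorem helical_polygon_torsion_angle (M : ℕ) (hM : 3 ≤ M)
    (a b : ℝ) (ha : a ∈ Set.Ioc (0 : ℝ) 1) (hb : b ∈ Set.Ico (0 : ℝ) 1)
    (hab : a ^ 2 + b ^ 2 = 1)
    (T : ℤ → EuclideanSpace ℝ (Fin 3))
    (hT : ∀ k : ℤ, T k = (WithLp.equiv 2 (Fin 3 → ℝ)).symm
      ![a * Real.cos (2 * Real.pi * k / M), a * Real.sin (2 * Real.pi * k / M), b]) :
    ∀ k : ℤ,
      cross3 (T (k - 1)) (T k) ≠ 0 ∧
      cross3 (T k) (T (k + 1)) ≠ 0 ∧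
      ‖cross3 (T (k - 1)) (T k)‖ = ‖cross3 (T k) (T (k + 1))‖ ∧
      ⟪cross3 (T (k - 1)) (T k), cross3 (T k) (T (k + 1))⟫ / ‖cross3 (T (k - 1)) (T k)‖ ^ 2 =
        Real.cos (2 * Real.arctan (b * Real.tan (Real.pi / M))) := by
  have hM' : (2 : ℝ) < M := by exact_mod_cast hM
  simpa only [hab, Real.sqrt_one, div_one] using helical_polygon_torsion_angle_general (b := b)
    ha.1.ne' (sin_two_mul_pi_div_pos hM').ne' T fun k => by
      rw [hT, mul_div_right_comm, mul_div_assoc]; rfl
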